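/- arXiv:2510.17216 — 2 statements merged into one kernel-verified Lean document; each statement's English description precedes it below -/
import Mathlib

section
/- Let (H, α) be a monoidal Hom-bialgebra, (A, β) a left (H, α)-Hom-comodule coalgebra with coaction ρ(a) = a₍₋₁₎ ⊗ a₍₀₎, and m an integer. Then the left m-Hom-smash coproduct (A ⋊ H, β ⊗ α), with comultiplication Δ(a ⋊ h) = (a₁ ⋊ α^m(a₂₍₋₁₎)α⁻¹(h₁)) ⊗ (β(a₂₍₀₎) ⋊ h₂) and counit ε(a ⋊ h) = ε(a)ε(h), is a monoidal Hom-coalgebra. -/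
open TensorProduct

noncomputable section

/-- A monoidal Hom-algebra `(A, β)`. -/
structure HomAlgebraStr (K : Type*) (A : Type*) [Field K] [AddCommGroup A] [Module K A] where
  mul : A →ₗ[K] A →ₗ[K] A
  one : A
  str : A ≃ₗ[K] A
  hom_assoc : ∀ a b c : A, mul (str a) (mul b c) = mul (mul a b) (str c)
  str_mul : ∀ a b : A, str (mul a b) = mul (str a) (str b)
  mul_one : ∀ a : A, mul a one = str a
  one_mul : ∀ a : A, mul one a = str a
  str_one : str one = one

/-- A monoidal Hom-coalgebra `(C, γ)`. -/
structure HomCoalgebraStr (K : Type*) (C : Type*) [Field K] [AddCommGroup C] [Module K C] where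
  comul : C →ₗ[K] C ⊗[K] C
  counit : C →ₗ[K] K
  str : C ≃ₗ[K] C
  hom_coassoc : ∀ c : C,
    TensorProduct.map str.symm.toLinearMap comul (comul c)
      = TensorProduct.assoc K C C C (TensorProduct.map comul str.symm.toLinearMap (comul c))
  comul_str : ∀ c : C, comul (str c) = TensorProduct.map str.toLinearMap str.toLinearMap (comul c)
  counit_comul_left : ∀ c : C,
    TensorProduct.lid K C (TensorProduct.map counit (LinearMap.id : C →ₗ[K] C) (comul c)) = str.symm c
  counit_comul_right : ∀ c : C,
    TensorProduct.rid K C (TensorProduct.map (LinearMap.id : C →ₗ[K] C) counit (comul c)) = str.symm c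
  counit_str : ∀ c : C, counit (str c) = counit c

/-- The componentwise multiplication on `N ⊗ N` induced by a bilinear multiplication on `N`. -/
def tensorSquareMul {K N : Type*} [Field K] [AddCommGroup N] [Module K N]
    (mul : N →ₗ[K] N →ₗ[K] N) :
    (N ⊗[K] N) →ₗ[K] (N ⊗[K] N) →ₗ[K] (N ⊗[K] N) :=
  TensorProduct.curry
    ((TensorProduct.map (TensorProduct.lift mul) (TensorProduct.lift mul)) ∘ₗ
      (TensorProduct.tensorTensorTensorComm K N N N N).toLinearMap)

/-- A monoidal Hom-bialgebra `(H, α)`. -/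
structure HomBialgebraStr (K : Type*) (H : Type*) [Field K] [AddCommGroup H] [Module K H]
    extends HomAlgebraStr K H where
  comul : H →ₗ[K] H ⊗[K] H
  counit : H →ₗ[K] K
  hom_coassoc : ∀ c : H,
    TensorProduct.map str.symm.toLinearMap comul (comul c)
      = TensorProduct.assoc K H H H (TensorProduct.map comul str.symm.toLinearMap (comul c))
  comul_str : ∀ c : H, comul (str c) = TensorProduct.map str.toLinearMap str.toLinearMap (comul c)
  counit_comul_left : ∀ c : H,
    TensorProduct.lid K H (TensorProduct.map counit (LinearMap.id : H →ₗ[K] H) (comul c)) = str.symm c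
  counit_comul_right : ∀ c : H,
    TensorProduct.rid K H (TensorProduct.map (LinearMap.id : H →ₗ[K] H) counit (comul c)) = str.symm c
  counit_str : ∀ c : H, counit (str c) = counit c
  comul_mul : ∀ a b : H, comul (mul a b) = tensorSquareMul mul (comul a) (comul b)
  comul_one : comul one = one ⊗ₜ[K] one
  counit_mul : ∀ a b : H, counit (mul a b) = counit a * counit b
  counit_one : counit one = 1

/-- A monoidal Hom-Hopf algebra `(H, α, S)`. -/
structure HomHopfStr (K : Type*) (H : Type*) [Field K] [AddCommGroup H] [Module K H]
    extends HomBialgebraStr K H where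
  antipode : H →ₗ[K] H
  antipode_str : ∀ h : H, antipode (str h) = str (antipode h)
  antipode_mul_left : ∀ h : H,
    TensorProduct.lift (mul ∘ₗ antipode) (comul h) = counit h • one
  antipode_mul_right : ∀ h : H,
    TensorProduct.lift (mul.compl₂ antipode) (comul h) = counit h • one

section Defs

variable {K H A C M : Type*} [Field K]
variable [AddCommGroup H] [Module K H] [AddCommGroup A] [Module K A]
variable [AddCommGroup C] [Module K C] [AddCommGroup M] [Module K M]

/-- `(A, β)` is a left weak `(H, α)`-Hom-module algebra via `act`:
`h·(ab) = (h₁·a)(h₂·b)` and `h·1 = ε(h)1`. -/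
structure IsWeakModuleAlgebra (HB : HomBialgebraStr K H) (AA : HomAlgebraStr K A)
    (act : H →ₗ[K] A →ₗ[K] A) : Prop where
  act_mul : ∀ (h : H) (a b : A),
    act h (AA.mul a b)
      = TensorProduct.lift AA.mul
          (TensorProduct.map (TensorProduct.lift act) (TensorProduct.lift act)
            (TensorProduct.map ((TensorProduct.mk K H A).flip a) ((TensorProduct.mk K H A).flip b)
              (HB.comul h)))
  act_one : ∀ h : H, act h AA.one = HB.counit h • AA.one

/-- `(C, β)` is a left `(H, α)`-Hom-comodule coalgebra via `coact a = a₍₋₁₎ ⊗ a₍₀₎`. -/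
structure IsComoduleCoalgebra (HB : HomBialgebraStr K H) (CC : HomCoalgebraStr K C)
    (coact : C →ₗ[K] H ⊗[K] C) : Prop where
  comodule_coassoc : ∀ c : C,
    TensorProduct.assoc K H H C
        (TensorProduct.map HB.comul CC.str.symm.toLinearMap (coact c))
      = TensorProduct.map HB.str.symm.toLinearMap coact (coact c)
  coact_str : ∀ c : C,
    coact (CC.str c) = TensorProduct.map HB.str.toLinearMap CC.str.toLinearMap (coact c)
  counit_coact : ∀ c : C,
    TensorProduct.lid K C (TensorProduct.map HB.counit (LinearMap.id : C →ₗ[K] C) (coact c))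
      = CC.str.symm c
  coact_comul : ∀ c : C,
    TensorProduct.map (LinearMap.id : H →ₗ[K] H) CC.comul (coact c)
      = TensorProduct.map (TensorProduct.lift HB.mul) (LinearMap.id : C ⊗[K] C →ₗ[K] C ⊗[K] C)
          (TensorProduct.tensorTensorTensorComm K H C H C
            (TensorProduct.map coact coact (CC.comul c)))
  counit_coact_one : ∀ c : C,
    TensorProduct.rid K H (TensorProduct.map (LinearMap.id : H →ₗ[K] H) CC.counit (coact c))
      = CC.counit c • HB.one

/-- The `(m,k)`-Hom-crossed product multiplication on simple tensors:
`(a ♯ h)(b ♯ g) = a[(α^m(h₁₁)·β⁻²(b)) σ(α^{k+1}(h₁₂), α^k(g₁))] ♯ α(h₂g₂)`. -/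
def cpMulElem (HB : HomBialgebraStr K H) (AA : HomAlgebraStr K A)
    (act : H →ₗ[K] A →ₗ[K] A) (σ : H →ₗ[K] H →ₗ[K] A) (m k : ℤ)
    (a : A) (h : H) (b : A) (g : H) : A ⊗[K] H :=
  TensorProduct.map
    ((AA.mul a) ∘ₗ TensorProduct.lift AA.mul ∘ₗ
      TensorProduct.map
        ((act.flip ((AA.str ^ (-2 : ℤ)) b)) ∘ₗ (HB.str ^ m).toLinearMap)
        (TensorProduct.lift σ ∘ₗ
          TensorProduct.map (HB.str ^ (k+1)).toLinearMap (HB.str ^ k).toLinearMap) ∘ₗ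
      (TensorProduct.assoc K H H H).toLinearMap)
    (HB.str.toLinearMap ∘ₗ TensorProduct.lift HB.mul)
    (TensorProduct.map (TensorProduct.map HB.comul (LinearMap.id : H →ₗ[K] H))
      (LinearMap.id : H ⊗[K] H →ₗ[K] H ⊗[K] H)
      (TensorProduct.tensorTensorTensorComm K H H H H (HB.comul h ⊗ₜ[K] HB.comul g)))

/-- The `m`-Hom-smash product multiplication on simple tensors:
`(a ♯ h)(b ♯ g) = a(α^m(h₁)·β⁻¹(b)) ♯ α(h₂)g`. -/
def smashMulElem (HB : HomBialgebraStr K H) (AA : HomAlgebraStr K A)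
    (act : H →ₗ[K] A →ₗ[K] A) (m : ℤ) (a : A) (h : H) (b : A) (g : H) : A ⊗[K] H :=
  TensorProduct.map
    ((AA.mul a) ∘ₗ (act.flip ((AA.str ^ (-1 : ℤ)) b)) ∘ₗ (HB.str ^ m).toLinearMap)
    ((HB.mul.flip g) ∘ₗ HB.str.toLinearMap)
    (HB.comul h)

/-- The `m`-Hom-smash coproduct comultiplication on simple tensors:
`Δ(a ⋊ h) = (a₁ ⋊ α^m(a₂₍₋₁₎)α⁻¹(h₁)) ⊗ (β(a₂₍₀₎) ⋊ h₂)`. -/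
def scComulElem (HB : HomBialgebraStr K H) (AC : HomCoalgebraStr K A)
    (coact : A →ₗ[K] H ⊗[K] A) (m : ℤ) (a : A) (h : H) :
    (A ⊗[K] H) ⊗[K] (A ⊗[K] H) :=
  TensorProduct.map
    (TensorProduct.map (LinearMap.id : A →ₗ[K] A)
        (TensorProduct.lift HB.mul ∘ₗ
          TensorProduct.map (HB.str ^ m).toLinearMap (HB.str ^ (-1 : ℤ)).toLinearMap) ∘ₗ
      (TensorProduct.assoc K A H H).toLinearMap)
    (TensorProduct.map AC.str.toLinearMap (LinearMap.id : H →ₗ[K] H))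
    (TensorProduct.tensorTensorTensorComm K (A ⊗[K] H) A H H
      ((TensorProduct.assoc K A H A).symm
          (TensorProduct.map (LinearMap.id : A →ₗ[K] A) coact (AC.comul a)) ⊗ₜ[K] HB.comul h))

/-- Condition (1) of Theorem 2.3. -/
def CPCond1 (HB : HomBialgebraStr K H) (AA : HomAlgebraStr K A)
    (σ : H →ₗ[K] H →ₗ[K] A) : Prop :=
  (∀ h : H, σ h HB.one = HB.counit h • AA.one) ∧
  (∀ h : H, σ HB.one h = HB.counit h • AA.one) ∧
  (∀ h g : H, σ (HB.str h) (HB.str g) = AA.str (σ h g))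

/-- Condition (2) of Theorem 2.3:
`[α^m(h₁l₁)·a] σ(α^{k+2}(h₂), α^{k+2}(l₂)) = σ(α^{k+2}(h₁), α^{k+2}(l₁)) [α^m(h₂l₂)·a]`. -/
def CPCond2 (HB : HomBialgebraStr K H) (AA : HomAlgebraStr K A)
    (act : H →ₗ[K] A →ₗ[K] A) (σ : H →ₗ[K] H →ₗ[K] A) (m k : ℤ) : Prop :=
  ∀ (h l : H) (a : A),
    TensorProduct.lift AA.mul
      (TensorProduct.map
        ((act.flip a) ∘ₗ (HB.str ^ m).toLinearMap ∘ₗ TensorProduct.lift HB.mul)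
        (TensorProduct.lift σ ∘ₗ
          TensorProduct.map (HB.str ^ (k+2)).toLinearMap (HB.str ^ (k+2)).toLinearMap)
        (TensorProduct.tensorTensorTensorComm K H H H H (HB.comul h ⊗ₜ[K] HB.comul l)))
    =
    TensorProduct.lift AA.mul
      (TensorProduct.map
        (TensorProduct.lift σ ∘ₗ
          TensorProduct.map (HB.str ^ (k+2)).toLinearMap (HB.str ^ (k+2)).toLinearMap)
        ((act.flip a) ∘ₗ (HB.str ^ m).toLinearMap ∘ₗ TensorProduct.lift HB.mul)
        (TensorProduct.tensorTensorTensorComm K H H H H (HB.comul h ⊗ₜ[K] HB.comul l)))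

/-- Condition (3) of Theorem 2.3:
`[α^{m+1}(h₁)·σ(α^{k+1}(l₁), α^{k+1}(g₁))] σ(α^{k+2}(h₂), α^{k+1}(l₂g₂))
  = σ(α^{k+2}(h₁), α^{k+2}(l₁)) σ(α^{k+1}(h₂l₂), α^{k+1}(g))`. -/
def CPCond3 (HB : HomBialgebraStr K H) (AA : HomAlgebraStr K A)
    (act : H →ₗ[K] A →ₗ[K] A) (σ : H →ₗ[K] H →ₗ[K] A) (m k : ℤ) : Prop :=
  ∀ h l g : H,
    TensorProduct.lift AA.mul
      (TensorProduct.map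
        (TensorProduct.lift act ∘ₗ
          TensorProduct.map (HB.str ^ (m+1)).toLinearMap
            (TensorProduct.lift σ ∘ₗ
              TensorProduct.map (HB.str ^ (k+1)).toLinearMap (HB.str ^ (k+1)).toLinearMap))
        (TensorProduct.lift σ ∘ₗ
          TensorProduct.map (HB.str ^ (k+2)).toLinearMap
            ((HB.str ^ (k+1)).toLinearMap ∘ₗ TensorProduct.lift HB.mul))
        (TensorProduct.tensorTensorTensorComm K H H (H ⊗[K] H) (H ⊗[K] H)
          (HB.comul h ⊗ₜ[K]
            (TensorProduct.tensorTensorTensorComm K H H H H (HB.comul l ⊗ₜ[K] HB.comul g)))))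
    =
    TensorProduct.lift AA.mul
      (TensorProduct.map
        (TensorProduct.lift σ ∘ₗ
          TensorProduct.map (HB.str ^ (k+2)).toLinearMap (HB.str ^ (k+2)).toLinearMap)
        ((σ.flip ((HB.str ^ (k+1)) g)) ∘ₗ (HB.str ^ (k+1)).toLinearMap ∘ₗ TensorProduct.lift HB.mul)
        (TensorProduct.tensorTensorTensorComm K H H H H (HB.comul h ⊗ₜ[K] HB.comul l)))

/-- `σ` is a twisted comodule cocycle:
`β(a₁) ⊗ α^{m+1}(a₂₍₋₁₎)g ⊗ a₂₍₀₎
  = a₁σ(α^{k+m+2}(a₂₍₋₁₎₁), α^{k+1}(g₁)) ⊗ α^{m+2}(a₂₍₋₁₎₂)α(g₂) ⊗ a₂₍₀₎`. -/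
def IsTwistedCocycle (HB : HomBialgebraStr K H) (AA : HomAlgebraStr K A)
    (AC : HomCoalgebraStr K A) (coact : A →ₗ[K] H ⊗[K] A)
    (σ : H →ₗ[K] H →ₗ[K] A) (m k : ℤ) : Prop :=
  ∀ (a : A) (g : H),
    (TensorProduct.assoc K A H A).symm
      (TensorProduct.map AA.str.toLinearMap
        (TensorProduct.map ((HB.mul.flip g) ∘ₗ (HB.str ^ (m+1)).toLinearMap)
          (LinearMap.id : A →ₗ[K] A))
        (TensorProduct.map (LinearMap.id : A →ₗ[K] A) coact (AC.comul a)))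
    =
    TensorProduct.map
      (TensorProduct.map (TensorProduct.lift AA.mul) (LinearMap.id : H →ₗ[K] H)
        ∘ₗ (TensorProduct.assoc K A A H).symm.toLinearMap
        ∘ₗ TensorProduct.map (LinearMap.id : A →ₗ[K] A)
            (TensorProduct.map
              (TensorProduct.lift σ ∘ₗ
                TensorProduct.map (HB.str ^ (k+m+2)).toLinearMap (HB.str ^ (k+1)).toLinearMap)
              (TensorProduct.lift HB.mul ∘ₗ
                TensorProduct.map (HB.str ^ (m+2)).toLinearMap HB.str.toLinearMap)
            ∘ₗ (TensorProduct.tensorTensorTensorComm K H H H H).toLinearMap)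
        ∘ₗ (TensorProduct.assoc K A (H ⊗[K] H) (H ⊗[K] H)).toLinearMap)
      (LinearMap.id : A →ₗ[K] A)
      ((TensorProduct.assoc K (A ⊗[K] (H ⊗[K] H)) (H ⊗[K] H) A).symm
        (TensorProduct.map (LinearMap.id : A ⊗[K] (H ⊗[K] H) →ₗ[K] A ⊗[K] (H ⊗[K] H))
          (TensorProduct.comm K A (H ⊗[K] H)).toLinearMap
          (TensorProduct.assoc K (A ⊗[K] (H ⊗[K] H)) A (H ⊗[K] H)
            ((TensorProduct.assoc K A (H ⊗[K] H) A).symm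
                (TensorProduct.map (LinearMap.id : A →ₗ[K] A)
                  (TensorProduct.map HB.comul (LinearMap.id : A →ₗ[K] A))
                  (TensorProduct.map (LinearMap.id : A →ₗ[K] A) coact (AC.comul a)))
              ⊗ₜ[K] HB.comul g))))

/-- Auxiliary map `(n ⊗ w) ⊗ t ↦ (α^j(n)·t) ⊗ f(w)` on `(H ⊗ M) ⊗ H`. -/
def coactMulAux (HB : HomBialgebraStr K H) (j : ℤ) (f : M →ₗ[K] M) :
    (H ⊗[K] M) ⊗[K] H →ₗ[K] H ⊗[K] M :=
  TensorProduct.map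
      (TensorProduct.lift HB.mul ∘ₗ
        TensorProduct.map (HB.str ^ j).toLinearMap (LinearMap.id : H →ₗ[K] H)) f
    ∘ₗ (TensorProduct.assoc K H H M).symm.toLinearMap
    ∘ₗ TensorProduct.map (LinearMap.id : H →ₗ[K] H) (TensorProduct.comm K M H).toLinearMap
    ∘ₗ (TensorProduct.assoc K H M H).toLinearMap

/-- (A1): `ε_A` is an algebra map. -/
def CondA1 (AA : HomAlgebraStr K A) (AC : HomCoalgebraStr K A) : Prop :=
  (∀ a b : A, AC.counit (AA.mul a b) = AC.counit a * AC.counit b) ∧ AC.counit AA.one = 1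

/-- (A2): `ε_A(h·a) = ε_H(h)ε_A(a)`. -/
def CondA2 (HB : HomBialgebraStr K H) (AC : HomCoalgebraStr K A)
    (act : H →ₗ[K] A →ₗ[K] A) : Prop :=
  ∀ (h : H) (a : A), AC.counit (act h a) = HB.counit h * AC.counit a

/-- (A3): `σ` is a coalgebra map. -/
def CondA3 (HB : HomBialgebraStr K H) (AC : HomCoalgebraStr K A)
    (σ : H →ₗ[K] H →ₗ[K] A) : Prop :=
  (∀ h g : H,
    AC.comul (σ h g)
      = TensorProduct.map (TensorProduct.lift σ) (TensorProduct.lift σ)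
          (TensorProduct.tensorTensorTensorComm K H H H H (HB.comul h ⊗ₜ[K] HB.comul g))) ∧
  (∀ h g : H, AC.counit (σ h g) = HB.counit h * HB.counit g)

/-- (A4): `Δ_A(1_A) = 1_A ⊗ 1_A`. -/
def CondA4 (AA : HomAlgebraStr K A) (AC : HomCoalgebraStr K A) : Prop :=
  AC.comul AA.one = AA.one ⊗ₜ[K] AA.one

/-- (A5): the coaction is an algebra map. -/
def CondA5 (HB : HomBialgebraStr K H) (AA : HomAlgebraStr K A)
    (coact : A →ₗ[K] H ⊗[K] A) : Prop :=
  (∀ a b : A,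
    coact (AA.mul a b)
      = TensorProduct.map (TensorProduct.lift HB.mul) (TensorProduct.lift AA.mul)
          (TensorProduct.tensorTensorTensorComm K H A H A (coact a ⊗ₜ[K] coact b))) ∧
  coact AA.one = HB.one ⊗ₜ[K] AA.one

/-- (A6). -/
def CondA6 (HB : HomBialgebraStr K H) (coact : A →ₗ[K] H ⊗[K] A)
    (σ : H →ₗ[K] H →ₗ[K] A) (m k : ℤ) : Prop :=
  ∀ h g : H,
    coactMulAux HB (m-1) (LinearMap.id : A →ₗ[K] A)
      (TensorProduct.map
        (coact ∘ₗ TensorProduct.lift σ ∘ₗ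
          TensorProduct.map (HB.str ^ (k+2)).toLinearMap (HB.str ^ (k+2)).toLinearMap)
        ((HB.str ^ (-1 : ℤ)).toLinearMap ∘ₗ TensorProduct.lift HB.mul)
        (TensorProduct.tensorTensorTensorComm K H H H H (HB.comul h ⊗ₜ[K] HB.comul g)))
    =
    TensorProduct.map (TensorProduct.lift HB.mul)
      (TensorProduct.lift σ ∘ₗ
        TensorProduct.map (HB.str ^ (k+1)).toLinearMap (HB.str ^ (k+1)).toLinearMap)
      (TensorProduct.tensorTensorTensorComm K H H H H (HB.comul h ⊗ₜ[K] HB.comul g))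

/-- (A7). -/
def CondA7 (HB : HomBialgebraStr K H) (AA : HomAlgebraStr K A) (AC : HomCoalgebraStr K A)
    (act : H →ₗ[K] A →ₗ[K] A) (coact : A →ₗ[K] H ⊗[K] A)
    (σ : H →ₗ[K] H →ₗ[K] A) (m k : ℤ) : Prop :=
  ∀ a b : A,
    AC.comul (AA.mul a b) =
      TensorProduct.map
        (TensorProduct.lift AA.mul
          ∘ₗ TensorProduct.map (LinearMap.id : A →ₗ[K] A)
              (TensorProduct.lift AA.mul
                ∘ₗ TensorProduct.map
                    (TensorProduct.lift act ∘ₗ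
                      TensorProduct.map (HB.str ^ (2*m)).toLinearMap (AA.str ^ (-2 : ℤ)).toLinearMap)
                    (TensorProduct.lift σ ∘ₗ
                      TensorProduct.map (HB.str ^ (k+m+1)).toLinearMap (HB.str ^ (k+m)).toLinearMap)
                ∘ₗ (TensorProduct.tensorTensorTensorComm K H H A H).toLinearMap)
          ∘ₗ (TensorProduct.assoc K A (H ⊗[K] H) (A ⊗[K] H)).toLinearMap)
        (AA.str.toLinearMap ∘ₗ TensorProduct.lift AA.mul)
        (TensorProduct.tensorTensorTensorComm K (A ⊗[K] (H ⊗[K] H)) A (A ⊗[K] H) A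
          ((TensorProduct.assoc K A (H ⊗[K] H) A).symm
              (TensorProduct.map (LinearMap.id : A →ₗ[K] A)
                (TensorProduct.map HB.comul (LinearMap.id : A →ₗ[K] A))
                (TensorProduct.map (LinearMap.id : A →ₗ[K] A) coact (AC.comul a)))
            ⊗ₜ[K]
            (TensorProduct.assoc K A H A).symm
              (TensorProduct.map (LinearMap.id : A →ₗ[K] A) coact (AC.comul b))))

/-- (A8). -/
def CondA8 (HB : HomBialgebraStr K H) (AA : HomAlgebraStr K A) (AC : HomCoalgebraStr K A)
    (act : H →ₗ[K] A →ₗ[K] A) (coact : A →ₗ[K] H ⊗[K] A)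
    (σ : H →ₗ[K] H →ₗ[K] A) (m k : ℤ) : Prop :=
  ∀ (h : H) (b : A),
    AC.comul (act ((HB.str ^ m) h) b) =
      TensorProduct.map
        (TensorProduct.lift AA.mul
          ∘ₗ TensorProduct.map
              (TensorProduct.lift act ∘ₗ
                TensorProduct.map (HB.str ^ m).toLinearMap (AA.str ^ (-1 : ℤ)).toLinearMap)
              (TensorProduct.lift σ ∘ₗ
                TensorProduct.map (HB.str ^ (k+1)).toLinearMap (HB.str ^ (k+m+1)).toLinearMap)
          ∘ₗ (TensorProduct.tensorTensorTensorComm K H H A H).toLinearMap)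
        (TensorProduct.lift act ∘ₗ
          TensorProduct.map (HB.str ^ m).toLinearMap AA.str.toLinearMap)
        (TensorProduct.tensorTensorTensorComm K (H ⊗[K] H) H (A ⊗[K] H) A
          (TensorProduct.map HB.comul (LinearMap.id : H →ₗ[K] H) (HB.comul h)
            ⊗ₜ[K]
            (TensorProduct.assoc K A H A).symm
              (TensorProduct.map (LinearMap.id : A →ₗ[K] A) coact (AC.comul b))))

/-- (A9). -/
def CondA9 (HB : HomBialgebraStr K H) (act : H →ₗ[K] A →ₗ[K] A)
    (coact : A →ₗ[K] H ⊗[K] A) (m : ℤ) : Prop :=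
  ∀ (h : H) (b : A),
    coactMulAux HB (m-1) (LinearMap.id : A →ₗ[K] A)
      (TensorProduct.map (coact ∘ₗ (act.flip b) ∘ₗ (HB.str ^ (m+1)).toLinearMap)
        (LinearMap.id : H →ₗ[K] H) (HB.comul h))
    =
    TensorProduct.map
      (TensorProduct.lift HB.mul ∘ₗ
        TensorProduct.map (LinearMap.id : H →ₗ[K] H) (HB.str ^ m).toLinearMap)
      (TensorProduct.lift act ∘ₗ
        TensorProduct.map (HB.str ^ m).toLinearMap (LinearMap.id : A →ₗ[K] A))
      (TensorProduct.tensorTensorTensorComm K H H H A (HB.comul h ⊗ₜ[K] coact b))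

/-- The Radford `[(m,k),m]`-biproduct structure on `A ⊗ H`. -/
structure IsRadfordBiproduct (HB : HomBialgebraStr K H) (AA : HomAlgebraStr K A)
    (AC : HomCoalgebraStr K A) (act : H →ₗ[K] A →ₗ[K] A) (coact : A →ₗ[K] H ⊗[K] A)
    (σ : H →ₗ[K] H →ₗ[K] A) (m k : ℤ) (B : HomBialgebraStr K (A ⊗[K] H)) : Prop where
  mul_def : ∀ (a : A) (h : H) (b : A) (g : H),
    B.mul (a ⊗ₜ[K] h) (b ⊗ₜ[K] g) = cpMulElem HB AA act σ m k a h b g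
  one_def : B.one = AA.one ⊗ₜ[K] HB.one
  comul_def : ∀ (a : A) (h : H), B.comul (a ⊗ₜ[K] h) = scComulElem HB AC coact m a h
  counit_def : ∀ (a : A) (h : H), B.counit (a ⊗ₜ[K] h) = AC.counit a * HB.counit h
  str_def : B.str = TensorProduct.congr AA.str HB.str

/-- `S_H` is a `σ`-antipode for `(H, α)`. -/
structure IsSigmaAntipode (HB : HomBialgebraStr K H) (AA : HomAlgebraStr K A)
    (σ : H →ₗ[K] H →ₗ[K] A) (S : H →ₗ[K] H) : Prop where
  antipode_str : ∀ h : H, S (HB.str h) = HB.str (S h)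
  right : ∀ h : H,
    TensorProduct.map (TensorProduct.lift σ) (TensorProduct.lift HB.mul)
        (TensorProduct.tensorTensorTensorComm K H H H H
          (TensorProduct.map HB.comul (HB.comul ∘ₗ S) (HB.comul h)))
      = HB.counit h • (AA.one ⊗ₜ[K] HB.one)
  left : ∀ h : H,
    TensorProduct.map (TensorProduct.lift σ) (TensorProduct.lift HB.mul)
        (TensorProduct.tensorTensorTensorComm K H H H H
          (TensorProduct.map (HB.comul ∘ₗ S) HB.comul (HB.comul h)))
      = HB.counit h • (AA.one ⊗ₜ[K] HB.one)

/-- `S_A` is a convolution inverse of `id_A`. -/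
def IsConvInvOfId (AA : HomAlgebraStr K A) (AC : HomCoalgebraStr K A)
    (SA : A →ₗ[K] A) : Prop :=
  (∀ a : A, TensorProduct.lift (AA.mul ∘ₗ SA) (AC.comul a) = AC.counit a • AA.one) ∧
  (∀ a : A, TensorProduct.lift (AA.mul.compl₂ SA) (AC.comul a) = AC.counit a • AA.one)

/-- `σ` and `σinv` are convolution inverses of each other. -/
def IsConvInvPair (HB : HomBialgebraStr K H) (AA : HomAlgebraStr K A)
    (σ σinv : H →ₗ[K] H →ₗ[K] A) : Prop :=
  (∀ h g : H,
    TensorProduct.lift AA.mul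
      (TensorProduct.map (TensorProduct.lift σ) (TensorProduct.lift σinv)
        (TensorProduct.tensorTensorTensorComm K H H H H (HB.comul h ⊗ₜ[K] HB.comul g)))
    = (HB.counit h * HB.counit g) • AA.one) ∧
  (∀ h g : H,
    TensorProduct.lift AA.mul
      (TensorProduct.map (TensorProduct.lift σinv) (TensorProduct.lift σ)
        (TensorProduct.tensorTensorTensorComm K H H H H (HB.comul h ⊗ₜ[K] HB.comul g)))
    = (HB.counit h * HB.counit g) • AA.one)

/-- The Radford antipode formula
`S(a ⊗ h) = (1_A ⊗ S_H(α^{m−1}(a₍₋₁₎)α⁻²(h)))·(S_A(a₍₀₎) ⊗ 1_H)`. -/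
def radfordAntipodeElem (HB : HomBialgebraStr K H) (AA : HomAlgebraStr K A)
    (coact : A →ₗ[K] H ⊗[K] A)
    (Bmul : (A ⊗[K] H) →ₗ[K] (A ⊗[K] H) →ₗ[K] (A ⊗[K] H))
    (SH : H →ₗ[K] H) (SA : A →ₗ[K] A) (m : ℤ) (a : A) (h : H) : A ⊗[K] H :=
  TensorProduct.lift Bmul
    (TensorProduct.map
      ((TensorProduct.mk K A H AA.one) ∘ₗ SH ∘ₗ (HB.mul.flip ((HB.str ^ (-2 : ℤ)) h)) ∘ₗ
        (HB.str ^ (m - 1)).toLinearMap)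
      (((TensorProduct.mk K A H).flip HB.one) ∘ₗ SA)
      (coact a))

/-- `φ^l(l ⊗ (a ⊗ h)) = (α(l₁₁)·β⁻¹(a)) σ(α^{k+2−m}(l₁₂), α^{k+1}(h₁)) ⊗ α^{1−m}(l₂)α(h₂)`. -/
def philElem (HB : HomBialgebraStr K H) (AA : HomAlgebraStr K A)
    (act : H →ₗ[K] A →ₗ[K] A) (σ : H →ₗ[K] H →ₗ[K] A) (m k : ℤ)
    (l : H) (a : A) (h : H) : A ⊗[K] H :=
  TensorProduct.map
    (TensorProduct.lift AA.mul ∘ₗ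
      TensorProduct.map ((act.flip ((AA.str ^ (-1 : ℤ)) a)) ∘ₗ HB.str.toLinearMap)
        (TensorProduct.lift σ ∘ₗ
          TensorProduct.map (HB.str ^ (k+2-m)).toLinearMap (HB.str ^ (k+1)).toLinearMap) ∘ₗ
      (TensorProduct.assoc K H H H).toLinearMap)
    (TensorProduct.lift HB.mul ∘ₗ
      TensorProduct.map (HB.str ^ (1-m)).toLinearMap HB.str.toLinearMap)
    (TensorProduct.map (TensorProduct.map HB.comul (LinearMap.id : H →ₗ[K] H))
      (LinearMap.id : H ⊗[K] H →ₗ[K] H ⊗[K] H)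
      (TensorProduct.tensorTensorTensorComm K H H H H (HB.comul l ⊗ₜ[K] HB.comul h)))

/-- `φ^r((a ⊗ h) ⊗ l) = a σ(α^{k+1}(h₁), α^{k+1−m}(l₁)) ⊗ α(h₂)α^{1−m}(l₂)`. -/
def phirElem (HB : HomBialgebraStr K H) (AA : HomAlgebraStr K A)
    (σ : H →ₗ[K] H →ₗ[K] A) (m k : ℤ) (a : A) (h : H) (l : H) : A ⊗[K] H :=
  TensorProduct.map
    ((AA.mul a) ∘ₗ TensorProduct.lift σ ∘ₗ
      TensorProduct.map (HB.str ^ (k+1)).toLinearMap (HB.str ^ (k+1-m)).toLinearMap)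
    (TensorProduct.lift HB.mul ∘ₗ
      TensorProduct.map HB.str.toLinearMap (HB.str ^ (1-m)).toLinearMap)
    (TensorProduct.tensorTensorTensorComm K H H H H (HB.comul h ⊗ₜ[K] HB.comul l))

/-- `(M, μ, φ)` is a left `(H, α, σ̄)`-Hom module. -/
def IsLeftSigmaHomModule (HB : HomBialgebraStr K H)
    (mulM : M →ₗ[K] M →ₗ[K] M) (strM : M →ₗ[K] M)
    (σbar : H →ₗ[K] H →ₗ[K] M) (φ : H →ₗ[K] M →ₗ[K] M) : Prop :=
  (∀ (g l : H) (x : M),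
    φ (HB.str g) (φ l x)
      = TensorProduct.lift mulM
          (TensorProduct.map (strM ∘ₗ TensorProduct.lift σbar)
            ((φ.flip x) ∘ₗ TensorProduct.lift HB.mul)
            (TensorProduct.tensorTensorTensorComm K H H H H (HB.comul g ⊗ₜ[K] HB.comul l))))
  ∧ (∀ x : M, φ HB.one x = strM x)

/-- `(M, μ, φ)` is a right `(H, α, σ̄)`-Hom module. -/
def IsRightSigmaHomModule (HB : HomBialgebraStr K H)
    (mulM : M →ₗ[K] M →ₗ[K] M) (strM : M →ₗ[K] M)
    (σbar : H →ₗ[K] H →ₗ[K] M) (φ : M →ₗ[K] H →ₗ[K] M) : Prop :=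
  (∀ (x : M) (l g : H),
    φ (φ x l) (HB.str g)
      = mulM (strM x)
          (TensorProduct.lift φ
            (TensorProduct.map (TensorProduct.lift σbar) (TensorProduct.lift HB.mul)
              (TensorProduct.tensorTensorTensorComm K H H H H (HB.comul l ⊗ₜ[K] HB.comul g)))))
  ∧ (∀ x : M, φ x HB.one = strM x)

/-- `(M, μ, φ⁺, φ⁻)` is a weak `(H, α)` Hom-bimodule. -/
def IsWeakHomBimodule (HB : HomBialgebraStr K H) (strM : M →ₗ[K] M)
    (φl : H →ₗ[K] M →ₗ[K] M) (φr : M →ₗ[K] H →ₗ[K] M) : Prop :=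
  (∀ x : M, φl HB.one x = strM x) ∧ (∀ x : M, φr x HB.one = strM x) ∧
  (∀ (h : H) (x : M) (g : H), φl (HB.str h) (φr x g) = φr (φl h x) (HB.str g))

/-- A weak `m`-Hom admissible mapping system `C ⇄ A ⇄ H`. -/
structure WeakAdmissibleSystem (HB : HomBialgebraStr K H)
    (CA : HomAlgebraStr K C) (CC : HomCoalgebraStr K C)
    (coact : C →ₗ[K] H ⊗[K] C) (m : ℤ) (AB : HomBialgebraStr K A)
    (j : C →ₗ[K] A) (p : A →ₗ[K] C) (i : H →ₗ[K] A) (π : A →ₗ[K] H) : Prop where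
  c_str_eq : CA.str = CC.str
  p_j : ∀ c : C, p (j c) = c
  pi_i : ∀ h : H, π (i h) = h
  pi_mul : ∀ a b : A, π (AB.mul a b) = HB.mul (π a) (π b)
  pi_one : π AB.one = HB.one
  pi_str : ∀ a : A, π (AB.str a) = HB.str (π a)
  pi_comul : ∀ a : A, TensorProduct.map π π (AB.comul a) = HB.comul (π a)
  pi_counit : ∀ a : A, HB.counit (π a) = AB.counit a
  i_one : i HB.one = AB.one
  i_str : ∀ h : H, i (HB.str h) = AB.str (i h)
  i_comul : ∀ h : H, TensorProduct.map i i (HB.comul h) = AB.comul (i h)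
  i_counit : ∀ h : H, AB.counit (i h) = HB.counit h
  p_str : ∀ a : A, p (AB.str a) = CC.str (p a)
  p_comul : ∀ a : A, TensorProduct.map p p (AB.comul a) = CC.comul (p a)
  p_counit : ∀ a : A, CC.counit (p a) = AB.counit a
  j_mul : ∀ c d : C, j (CA.mul c d) = AB.mul (j c) (j d)
  j_one : j CA.one = AB.one
  j_str : ∀ c : C, j (CC.str c) = AB.str (j c)
  p_left_act : ∀ (h : H) (a : A),
    p (AB.mul (i ((HB.str ^ (-m)) h)) a) = HB.counit h • CC.str (p a)
  p_right_act : ∀ (a : A) (h : H),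
    p (AB.mul a (i ((HB.str ^ (-m)) h))) = HB.counit h • CC.str (p a)
  sigma_mod : ∃ σbar : H →ₗ[K] H →ₗ[K] A,
    IsLeftSigmaHomModule HB AB.mul AB.str.toLinearMap σbar
        (AB.mul ∘ₗ i ∘ₗ (HB.str ^ (-m)).toLinearMap)
      ∧ IsRightSigmaHomModule HB AB.mul AB.str.toLinearMap σbar
        (AB.mul.compl₂ (i ∘ₗ (HB.str ^ (-m)).toLinearMap))
  sub_l : ∀ c : C, ∃ y : H ⊗[K] C,
    TensorProduct.map ((HB.str ^ (-m)).toLinearMap ∘ₗ π) (LinearMap.id : A →ₗ[K] A)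
        (AB.comul (j c))
      = TensorProduct.map (LinearMap.id : H →ₗ[K] H) j y
  sub_r : ∀ c : C, ∃ z : C ⊗[K] H,
    TensorProduct.map (LinearMap.id : A →ₗ[K] A) ((HB.str ^ (-m)).toLinearMap ∘ₗ π)
        (AB.comul (j c))
      = TensorProduct.map j (LinearMap.id : H →ₗ[K] H) z
  p_col : ∀ c : C,
    TensorProduct.map (LinearMap.id : H →ₗ[K] H) p
        (TensorProduct.map ((HB.str ^ (-m)).toLinearMap ∘ₗ π) (LinearMap.id : A →ₗ[K] A)
          (AB.comul (j c)))
      = coact c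
  p_cor : ∀ c : C,
    TensorProduct.map p (LinearMap.id : H →ₗ[K] H)
        (TensorProduct.map (LinearMap.id : A →ₗ[K] A) ((HB.str ^ (-m)).toLinearMap ∘ₗ π)
          (AB.comul (j c)))
      = CC.str.symm c ⊗ₜ[K] HB.one
  split : ∀ a : A,
    TensorProduct.lift AB.mul (TensorProduct.map (j ∘ₗ p) (i ∘ₗ π) (AB.comul a)) = a

/-- The map `f : C ♯ H → A`, `c ⊗ h ↦ γ⁻¹(j(c)i(h))`. -/
def admF (AB : HomBialgebraStr K A) (j : C →ₗ[K] A) (i : H →ₗ[K] A) :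
    C ⊗[K] H →ₗ[K] A :=
  AB.str.symm.toLinearMap ∘ₗ TensorProduct.lift ((AB.mul ∘ₗ j).compl₂ i)

/-- The map `g : A → C ♯ H`, `a ↦ β(p(a₁)) ⊗ α(π(a₂))`. -/
def admG (HB : HomBialgebraStr K H) (CC : HomCoalgebraStr K C)
    (AB : HomBialgebraStr K A) (p : A →ₗ[K] C) (π : A →ₗ[K] H) :
    A →ₗ[K] C ⊗[K] H :=
  TensorProduct.map (CC.str.toLinearMap ∘ₗ p) (HB.str.toLinearMap ∘ₗ π) ∘ₗ AB.comul

end Defs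

section Helpers

variable {K H A : Type*} [Field K]
variable [AddCommGroup H] [Module K H] [AddCommGroup A] [Module K A]

/-- `a ⊗ (u ⊗ b), g ⊗ k ↦ (a ⊗ φ(u) α⁻¹(g)) ⊗ (β b ⊗ k)`. -/
def scG (mul : H →ₗ[K] H →ₗ[K] H) (φ α : H ≃ₗ[K] H) (β : A ≃ₗ[K] A) :
    (A ⊗[K] (H ⊗[K] A)) ⊗[K] (H ⊗[K] H) →ₗ[K] (A ⊗[K] H) ⊗[K] (A ⊗[K] H) :=
  TensorProduct.map
    (TensorProduct.map (LinearMap.id : A →ₗ[K] A)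
        (TensorProduct.lift mul ∘ₗ TensorProduct.map φ.toLinearMap α.symm.toLinearMap) ∘ₗ
      (TensorProduct.assoc K A H H).toLinearMap)
    (TensorProduct.map β.toLinearMap (LinearMap.id : H →ₗ[K] H))
  ∘ₗ (TensorProduct.tensorTensorTensorComm K (A ⊗[K] H) A H H).toLinearMap
  ∘ₗ TensorProduct.map (TensorProduct.assoc K A H A).symm.toLinearMap LinearMap.id

@[simp]
theorem scG_tmul (mul : H →ₗ[K] H →ₗ[K] H) (φ α : H ≃ₗ[K] H) (β : A ≃ₗ[K] A)
    (a b : A) (u g k : H) :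
    scG mul φ α β ((a ⊗ₜ (u ⊗ₜ b)) ⊗ₜ (g ⊗ₜ k)) =
      (a ⊗ₜ[K] mul (φ u) (α.symm g)) ⊗ₜ[K] (β b ⊗ₜ[K] k) := by
  simp [scG]

/-- Left iterated comultiplication map. -/
def scFL (mul : H →ₗ[K] H →ₗ[K] H) (φ α : H ≃ₗ[K] H) (β : A ≃ₗ[K] A) :
    (A ⊗[K] (H ⊗[K] (A ⊗[K] (H ⊗[K] A)))) ⊗[K] (H ⊗[K] (H ⊗[K] H)) →ₗ[K]
      (A ⊗[K] H) ⊗[K] ((A ⊗[K] H) ⊗[K] (A ⊗[K] H)) :=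
  TensorProduct.map
    (TensorProduct.map LinearMap.id
        (α.symm.toLinearMap ∘ₗ TensorProduct.lift mul ∘ₗ
          TensorProduct.map φ.toLinearMap α.symm.toLinearMap) ∘ₗ
      (TensorProduct.assoc K A H H).toLinearMap)
    (scG mul φ α β ∘ₗ TensorProduct.map
      (TensorProduct.map β.toLinearMap (TensorProduct.map α.toLinearMap β.toLinearMap))
      LinearMap.id)
  ∘ₗ (TensorProduct.tensorTensorTensorComm K (A ⊗[K] H) (A ⊗[K] (H ⊗[K] A)) H
      (H ⊗[K] H)).toLinearMap
  ∘ₗ TensorProduct.map (TensorProduct.assoc K A H (A ⊗[K] (H ⊗[K] A))).symm.toLinearMap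
      LinearMap.id

theorem scFL_tmul (mul : H →ₗ[K] H →ₗ[K] H) (φ α : H ≃ₗ[K] H) (β : A ≃ₗ[K] A)
    (a : A) (u g : H) (z : A ⊗[K] (H ⊗[K] A)) (y : H ⊗[K] H) :
    scFL mul φ α β ((a ⊗ₜ (u ⊗ₜ z)) ⊗ₜ (g ⊗ₜ y)) =
      (a ⊗ₜ[K] α.symm (mul (φ u) (α.symm g))) ⊗ₜ[K]
        scG mul φ α β (TensorProduct.map β.toLinearMap
          (TensorProduct.map α.toLinearMap β.toLinearMap) z ⊗ₜ[K] y) := by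
  simp [scFL]

/-- Right iterated comultiplication map. -/
def scFR (mul : H →ₗ[K] H →ₗ[K] H) (φ α : H ≃ₗ[K] H) (β : A ≃ₗ[K] A) :
    ((A ⊗[K] (H ⊗[K] A)) ⊗[K] ((H ⊗[K] H) ⊗[K] A)) ⊗[K] ((H ⊗[K] H) ⊗[K] H) →ₗ[K]
      ((A ⊗[K] H) ⊗[K] (A ⊗[K] H)) ⊗[K] (A ⊗[K] H) :=
  TensorProduct.map
    (scG mul φ α β ∘ₗ TensorProduct.map LinearMap.id
        (TensorProduct.lift (tensorSquareMul mul) ∘ₗ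
          TensorProduct.map (TensorProduct.map φ.toLinearMap φ.toLinearMap)
            (TensorProduct.map α.symm.toLinearMap α.symm.toLinearMap)) ∘ₗ
      (TensorProduct.assoc K (A ⊗[K] (H ⊗[K] A)) (H ⊗[K] H) (H ⊗[K] H)).toLinearMap)
    LinearMap.id
  ∘ₗ (TensorProduct.tensorTensorTensorComm K ((A ⊗[K] (H ⊗[K] A)) ⊗[K] (H ⊗[K] H)) A
      (H ⊗[K] H) H).toLinearMap
  ∘ₗ TensorProduct.map
      (TensorProduct.assoc K (A ⊗[K] (H ⊗[K] A)) (H ⊗[K] H) A).symm.toLinearMap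
      LinearMap.id

theorem scFR_tmul (mul : H →ₗ[K] H →ₗ[K] H) (φ α : H ≃ₗ[K] H) (β : A ≃ₗ[K] A)
    (z : A ⊗[K] (H ⊗[K] A)) (u y : H ⊗[K] H) (b : A) (k : H) :
    scFR mul φ α β ((z ⊗ₜ (u ⊗ₜ b)) ⊗ₜ (y ⊗ₜ k)) =
      scG mul φ α β (z ⊗ₜ tensorSquareMul mul
          (TensorProduct.map φ.toLinearMap φ.toLinearMap u)
          (TensorProduct.map α.symm.toLinearMap α.symm.toLinearMap y)) ⊗ₜ[K] (b ⊗ₜ[K] k) := by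
  simp [scFR]

@[simp]
theorem tensorSquareMul_tmul (mul : H →ₗ[K] H →ₗ[K] H) (a b c d : H) :
    tensorSquareMul mul (a ⊗ₜ b) (c ⊗ₜ d) = mul a c ⊗ₜ[K] mul b d := by
  simp [tensorSquareMul]

/-- `P a = a₁ ⊗ a₂₍₋₁₎ ⊗ a₂₍₀₎`. -/
def scP (AC : HomCoalgebraStr K A) (coact : A →ₗ[K] H ⊗[K] A) :
    A →ₗ[K] A ⊗[K] (H ⊗[K] A) :=
  TensorProduct.map LinearMap.id coact ∘ₗ AC.comul

/-- `Q`. -/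
def scQ (HB : HomBialgebraStr K H) (coact : A →ₗ[K] H ⊗[K] A) :
    A ⊗[K] A →ₗ[K] H ⊗[K] (A ⊗[K] (H ⊗[K] A)) :=
  TensorProduct.map (TensorProduct.lift HB.mul) (TensorProduct.map LinearMap.id coact)
  ∘ₗ (TensorProduct.tensorTensorTensorComm K H A H A).toLinearMap
  ∘ₗ TensorProduct.map coact coact

/-- The comultiplication. -/
def scComul (HB : HomBialgebraStr K H) (AC : HomCoalgebraStr K A)
    (coact : A →ₗ[K] H ⊗[K] A) (φ : H ≃ₗ[K] H) :
    A ⊗[K] H →ₗ[K] (A ⊗[K] H) ⊗[K] (A ⊗[K] H) :=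
  scG HB.mul φ HB.str AC.str ∘ₗ TensorProduct.map (scP AC coact) HB.comul

theorem scMapMap {M N M₁ N₁ M₂ N₂ : Type*}
    [AddCommGroup M] [Module K M] [AddCommGroup N] [Module K N]
    [AddCommGroup M₁] [Module K M₁] [AddCommGroup N₁] [Module K N₁]
    [AddCommGroup M₂] [Module K M₂] [AddCommGroup N₂] [Module K N₂]
    (f : M →ₗ[K] M₁) (g : N →ₗ[K] N₁) (f' : M₁ →ₗ[K] M₂) (g' : N₁ →ₗ[K] N₂) (x : M ⊗[K] N) :
    TensorProduct.map f' g' (TensorProduct.map f g x) =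
      TensorProduct.map (f' ∘ₗ f) (g' ∘ₗ g) x := by
  rw [TensorProduct.map_comp]; rfl

theorem equiv_symm_comul {C : Type*} [AddCommGroup C] [Module K C] {M N : Type*}
    [AddCommGroup M] [Module K M] [AddCommGroup N] [Module K N]
    (f : C →ₗ[K] M ⊗[K] N) (e : C ≃ₗ[K] C) (e₁ : M ≃ₗ[K] M) (e₂ : N ≃ₗ[K] N)
    (h : ∀ c, f (e c) = TensorProduct.map e₁.toLinearMap e₂.toLinearMap (f c)) (c : C) :
    f (e.symm c) = TensorProduct.map e₁.symm.toLinearMap e₂.symm.toLinearMap (f c) := by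
  have h1 := h (e.symm c)
  rw [e.apply_symm_apply] at h1
  rw [h1, ← LinearMap.comp_apply, ← TensorProduct.map_comp]
  simp

/-- Compatible automorphisms of a Hom-bialgebra. -/
structure ScCompat (HB : HomBialgebraStr K H) (φ : H ≃ₗ[K] H) : Prop where
  mul : ∀ a b, φ (HB.mul a b) = HB.mul (φ a) (φ b)
  comul : ∀ a, HB.comul (φ a) = TensorProduct.map φ.toLinearMap φ.toLinearMap (HB.comul a)
  counit : ∀ a, HB.counit (φ a) = HB.counit a
  one : φ HB.one = HB.one
  str : ∀ a, φ (HB.str a) = HB.str (φ a)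

theorem ScCompat.symm {HB : HomBialgebraStr K H} {φ : H ≃ₗ[K] H} (h : ScCompat HB φ) :
    ScCompat HB φ.symm where
  mul a b := by rw [LinearEquiv.symm_apply_eq, h.mul]; simp
  comul := equiv_symm_comul _ _ _ _ h.comul
  counit a := by rw [← h.counit]; simp
  one := by rw [LinearEquiv.symm_apply_eq, h.one]
  str a := by rw [LinearEquiv.symm_apply_eq, h.str]; simp

theorem ScCompat.trans {HB : HomBialgebraStr K H} {φ ψ : H ≃ₗ[K] H} (h : ScCompat HB φ)
    (h' : ScCompat HB ψ) : ScCompat HB (φ * ψ) where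
  mul a b := by simp [h.mul, h'.mul]
  comul a := by
    rw [LinearEquiv.mul_apply, h.comul, h'.comul, ← LinearMap.comp_apply, ← TensorProduct.map_comp]
    rfl
  counit a := by simp [h.counit, h'.counit]
  one := by simp [h.one, h'.one]
  str a := by simp [h.str, h'.str]

theorem ScCompat.self (HB : HomBialgebraStr K H) : ScCompat HB HB.str :=
  ⟨HB.str_mul, HB.comul_str, HB.counit_str, HB.str_one, fun _ => rfl⟩

theorem ScCompat.zpow (HB : HomBialgebraStr K H) (m : ℤ) : ScCompat HB (HB.str ^ m) := by
  have h1 : ScCompat HB (1 : H ≃ₗ[K] H) :=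
    ⟨by simp, fun a => by
      have : (1 : H ≃ₗ[K] H).toLinearMap = LinearMap.id := rfl
      simp [this], by simp, by simp, by simp⟩
  induction m with
  | zero => simpa using h1
  | succ n ih => rw [zpow_add_one]; exact ih.trans (ScCompat.self HB)
  | pred n ih => rw [zpow_sub_one]; exact ih.trans (ScCompat.self HB).symm

variable (HB : HomBialgebraStr K H) (AC : HomCoalgebraStr K A)
    (coact : A →ₗ[K] H ⊗[K] A) (φ : H ≃ₗ[K] H)

theorem scP_str (hcc : IsComoduleCoalgebra HB AC coact) (a : A) :
    scP AC coact (AC.str a) = TensorProduct.map AC.str.toLinearMap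
      (TensorProduct.map HB.str.toLinearMap AC.str.toLinearMap) (scP AC coact a) := by
  simp only [scP, LinearMap.comp_apply, AC.comul_str]
  generalize AC.comul a = x
  induction x using TensorProduct.induction_on with
  | zero => simp
  | add x y hx hy => simp only [map_add, hx, hy]
  | tmul x y => simp [hcc.coact_str]

theorem scG_str (hφ : ScCompat HB φ) (x : A ⊗[K] (H ⊗[K] A)) (y : H ⊗[K] H) :
    scG HB.mul φ HB.str AC.str
      (TensorProduct.map AC.str.toLinearMap
        (TensorProduct.map HB.str.toLinearMap AC.str.toLinearMap) x ⊗ₜ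
       TensorProduct.map HB.str.toLinearMap HB.str.toLinearMap y) =
    TensorProduct.map (TensorProduct.congr AC.str HB.str).toLinearMap
      (TensorProduct.congr AC.str HB.str).toLinearMap
      (scG HB.mul φ HB.str AC.str (x ⊗ₜ y)) := by
  induction x using TensorProduct.induction_on with
  | zero => simp
  | add x y hx hy => simp only [map_add, TensorProduct.add_tmul, hx, hy]
  | tmul a x =>
  induction x using TensorProduct.induction_on with
  | zero => simp
  | add x y hx hy => simp only [map_add, TensorProduct.add_tmul, TensorProduct.tmul_add, hx, hy]
  | tmul u b =>
  induction y using TensorProduct.induction_on with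
  | zero => simp
  | add x y hx hy => simp only [map_add, TensorProduct.tmul_add, hx, hy]
  | tmul g k => simp [hφ.str, HB.str_mul]

theorem scComul_str (hcc : IsComoduleCoalgebra HB AC coact) (hφ : ScCompat HB φ)
    (x : A ⊗[K] H) :
    scComul HB AC coact φ (TensorProduct.congr AC.str HB.str x) =
    TensorProduct.map (TensorProduct.congr AC.str HB.str).toLinearMap
      (TensorProduct.congr AC.str HB.str).toLinearMap (scComul HB AC coact φ x) := by
  induction x using TensorProduct.induction_on with
  | zero => simp
  | add x y hx hy => simp only [map_add, hx, hy]
  | tmul a h =>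
    simp only [scComul, TensorProduct.congr_tmul, LinearMap.comp_apply, TensorProduct.map_tmul]
    rw [scP_str HB AC coact hcc, HB.comul_str, scG_str HB AC φ hφ]

theorem scL (hcc : IsComoduleCoalgebra HB AC coact) (x : A ⊗[K] (H ⊗[K] A)) (y : H ⊗[K] H) :
    TensorProduct.map (TensorProduct.congr AC.str HB.str).symm.toLinearMap
      (scComul HB AC coact φ) (scG HB.mul φ HB.str AC.str (x ⊗ₜ y)) =
    scFL HB.mul φ HB.str AC.str
      (TensorProduct.map AC.str.symm.toLinearMap
        (TensorProduct.map LinearMap.id (scP AC coact)) x ⊗ₜ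
       TensorProduct.map LinearMap.id HB.comul y) := by
  induction x using TensorProduct.induction_on with
  | zero => simp
  | add x y hx hy => simp only [map_add, TensorProduct.add_tmul, hx, hy]
  | tmul a x =>
  induction x using TensorProduct.induction_on with
  | zero => simp
  | add x y hx hy => simp only [map_add, TensorProduct.add_tmul, TensorProduct.tmul_add, hx, hy]
  | tmul u b =>
  induction y using TensorProduct.induction_on with
  | zero => simp
  | add x y hx hy => simp only [map_add, TensorProduct.tmul_add, hx, hy]
  | tmul g k =>
    simp [scFL_tmul, scComul, scP_str HB AC coact hcc, TensorProduct.congr_symm]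

theorem scR (hφ : ScCompat HB φ) (x : A ⊗[K] (H ⊗[K] A)) (y : H ⊗[K] H) :
    TensorProduct.map (scComul HB AC coact φ)
      (TensorProduct.congr AC.str HB.str).symm.toLinearMap
       (scG HB.mul φ HB.str AC.str (x ⊗ₜ y)) =
    scFR HB.mul φ HB.str AC.str
      (TensorProduct.map (scP AC coact)
        (TensorProduct.map HB.comul LinearMap.id) x ⊗ₜ
       TensorProduct.map HB.comul HB.str.symm.toLinearMap y) := by
  induction x using TensorProduct.induction_on with
  | zero => simp
  | add x y hx hy => simp only [map_add, TensorProduct.add_tmul, hx, hy]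
  | tmul a x =>
  induction x using TensorProduct.induction_on with
  | zero => simp
  | add x y hx hy => simp only [map_add, TensorProduct.add_tmul, TensorProduct.tmul_add, hx, hy]
  | tmul u b =>
  induction y using TensorProduct.induction_on with
  | zero => simp
  | add x y hx hy => simp only [map_add, TensorProduct.tmul_add, hx, hy]
  | tmul g k =>
    simp [scFR_tmul, scComul, TensorProduct.congr_symm, HB.comul_mul, hφ.comul,
      (ScCompat.self HB).symm.comul]

theorem scLeftP (hcc : IsComoduleCoalgebra HB AC coact) (a : A) :
    TensorProduct.map AC.str.symm.toLinearMap
        (TensorProduct.map LinearMap.id (scP AC coact)) (scP AC coact a) =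
    TensorProduct.map LinearMap.id (scQ HB coact)
      (TensorProduct.assoc K A A A
        (TensorProduct.map AC.comul AC.str.symm.toLinearMap (AC.comul a))) := by
  rw [← AC.hom_coassoc]
  simp only [scP, LinearMap.comp_apply]
  generalize AC.comul a = x
  induction x using TensorProduct.induction_on with
  | zero => simp
  | add x y hx hy => simp only [map_add, hx, hy]
  | tmul x y =>
    simp only [TensorProduct.map_tmul, LinearMap.id_apply]
    congr 1
    have h := congrArg (TensorProduct.map (LinearMap.id : H →ₗ[K] H)
      (TensorProduct.map (LinearMap.id : A →ₗ[K] A) coact)) (hcc.coact_comul y)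
    simp only [scMapMap, LinearMap.id_comp, LinearMap.comp_id] at h
    simpa [scQ] using h

theorem scFinal (hcc : IsComoduleCoalgebra HB AC coact) (hφ : ScCompat HB φ)
    (z : A ⊗[K] A) (w : (H ⊗[K] H) ⊗[K] H) :
    scFL HB.mul φ HB.str AC.str
      (TensorProduct.map LinearMap.id (scQ HB coact)
      (TensorProduct.assoc K A A A
        (TensorProduct.map AC.comul AC.str.symm.toLinearMap z)) ⊗ₜ
       TensorProduct.map HB.str.toLinearMap LinearMap.id (TensorProduct.assoc K H H H w)) =
    TensorProduct.assoc K _ _ _ (scFR HB.mul φ HB.str AC.str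
      (TensorProduct.map (scP AC coact) (TensorProduct.map HB.comul LinearMap.id)
        (TensorProduct.map LinearMap.id coact z) ⊗ₜ w)) := by
  induction w using TensorProduct.induction_on with
  | zero => simp
  | add x y hx hy => simp only [map_add, TensorProduct.tmul_add, hx, hy]
  | tmul w l =>
  induction w using TensorProduct.induction_on with
  | zero => simp
  | add x y hx hy => simp only [map_add, TensorProduct.tmul_add, TensorProduct.add_tmul, hx, hy]
  | tmul g k =>
  induction z using TensorProduct.induction_on with
  | zero => simp
  | add x y hx hy => simp only [map_add, TensorProduct.add_tmul, hx, hy]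
  | tmul p q =>
  have hq : TensorProduct.map HB.comul (LinearMap.id : A →ₗ[K] A) (coact q) =
      TensorProduct.map LinearMap.id AC.str.toLinearMap ((TensorProduct.assoc K H H A).symm
        (TensorProduct.map HB.str.symm.toLinearMap coact (coact q))) := by
    rw [← hcc.comodule_coassoc]
    generalize coact q = x
    induction x using TensorProduct.induction_on with
    | zero => simp
    | add x y hx hy => simp only [map_add, hx, hy]
    | tmul x y => simp
  have hs := equiv_symm_comul coact AC.str HB.str AC.str hcc.coact_str
  simp only [TensorProduct.map_tmul, LinearMap.id_apply, hq, scP, LinearMap.comp_apply]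
  generalize AC.comul p = x
  induction x using TensorProduct.induction_on with
  | zero => simp
  | add x y hx hy => simp only [map_add, TensorProduct.add_tmul, hx, hy]
  | tmul a b =>
  simp only [scQ, TensorProduct.map_tmul, LinearMap.id_apply, LinearMap.comp_apply,
    LinearEquiv.coe_coe, TensorProduct.assoc_tmul, hs q]
  generalize coact b = x
  induction x using TensorProduct.induction_on with
  | zero => simp
  | add x y hx hy => simp only [map_add, TensorProduct.add_tmul, TensorProduct.tmul_add, hx, hy]
  | tmul c d =>
  generalize coact q = x
  induction x using TensorProduct.induction_on with
  | zero => simp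
  | add x y hx hy => simp only [map_add, TensorProduct.add_tmul, TensorProduct.tmul_add, hx, hy]
  | tmul u r =>
  simp only [TensorProduct.map_tmul, LinearMap.id_apply, LinearMap.comp_apply,
    LinearEquiv.coe_coe, TensorProduct.assoc_tmul, hs r,
    TensorProduct.tensorTensorTensorComm_tmul, TensorProduct.lift.tmul]
  generalize coact r = x
  induction x using TensorProduct.induction_on with
  | zero => simp
  | add x y hx hy => simp only [map_add, TensorProduct.add_tmul, TensorProduct.tmul_add, hx, hy]
  | tmul v e =>
  have hα := (ScCompat.self HB).symm
  have hassoc : HB.str.symm (HB.mul (φ (HB.mul c (HB.str.symm u))) g) =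
      HB.mul (φ c) (HB.str.symm (HB.mul (φ (HB.str.symm u)) (HB.str.symm g))) := by
    have := HB.hom_assoc (HB.str.symm (φ c)) (HB.str.symm (φ (HB.str.symm u)))
      (HB.str.symm (HB.str.symm g))
    simp only [LinearEquiv.apply_symm_apply] at this
    rw [hα.mul, hα.mul, this, hφ.mul, hα.mul]
  simp [scFL_tmul, scFR_tmul, hassoc]

theorem scCoassoc (hcc : IsComoduleCoalgebra HB AC coact) (hφ : ScCompat HB φ)
    (x : A ⊗[K] H) :
    TensorProduct.map (TensorProduct.congr AC.str HB.str).symm.toLinearMap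
      (scComul HB AC coact φ) (scComul HB AC coact φ x) =
    TensorProduct.assoc K _ _ _ (TensorProduct.map (scComul HB AC coact φ)
      (TensorProduct.congr AC.str HB.str).symm.toLinearMap (scComul HB AC coact φ x)) := by
  induction x using TensorProduct.induction_on with
  | zero => simp
  | add x y hx hy => simp only [map_add, hx, hy]
  | tmul a h =>
    have e : scComul HB AC coact φ (a ⊗ₜ h) =
      scG HB.mul φ HB.str AC.str (scP AC coact a ⊗ₜ HB.comul h) := by simp [scComul]
    have hh : TensorProduct.map LinearMap.id HB.comul (HB.comul h) =
        TensorProduct.map HB.str.toLinearMap LinearMap.id (TensorProduct.assoc K H H H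
          (TensorProduct.map HB.comul HB.str.symm.toLinearMap (HB.comul h))) := by
      rw [← HB.hom_coassoc, scMapMap]
      simp
    rw [e, scL HB AC coact φ hcc, scR HB AC coact φ hφ, scLeftP HB AC coact hcc, hh,
      scFinal HB AC coact φ hcc hφ]
    rfl

/-- The counit. -/
def scCounit : A ⊗[K] H →ₗ[K] K :=
  LinearMap.mul' K K ∘ₗ TensorProduct.map AC.counit HB.counit

theorem scCounitLeft (hcc : IsComoduleCoalgebra HB AC coact) (hφ : ScCompat HB φ)
    (x : A ⊗[K] H) :
    TensorProduct.lid K _ (TensorProduct.map (scCounit HB AC) LinearMap.id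
      (scComul HB AC coact φ x)) = (TensorProduct.congr AC.str HB.str).symm x := by
  induction x using TensorProduct.induction_on with
  | zero => simp
  | add x y hx hy => simp only [map_add, hx, hy]
  | tmul a h =>
    rw [TensorProduct.congr_symm_tmul, ← AC.counit_comul_left, ← HB.counit_comul_left]
    simp only [scComul, scP, LinearMap.comp_apply, TensorProduct.map_tmul]
    generalize AC.comul a = x
    generalize HB.comul h = y
    induction y using TensorProduct.induction_on with
    | zero => simp
    | add x y hx hy => simp only [map_add, TensorProduct.tmul_add, hx, hy]
    | tmul g k =>
    induction x using TensorProduct.induction_on with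
    | zero => simp
    | add x y hx hy => simp only [map_add, TensorProduct.add_tmul, hx, hy]
    | tmul p q =>
    have hq : q = AC.str (TensorProduct.lid K A
        (TensorProduct.map HB.counit LinearMap.id (coact q))) := by
      rw [hcc.counit_coact]; simp
    simp only [TensorProduct.map_tmul, LinearMap.id_apply, TensorProduct.lid_tmul]
    conv_rhs => rw [hq]
    generalize coact q = x
    induction x using TensorProduct.induction_on with
    | zero => simp
    | add x y hx hy =>
      simp only [map_add, TensorProduct.add_tmul, TensorProduct.tmul_add, smul_add, hx, hy]
    | tmul u b =>
    simp [scCounit, HB.counit_mul, hφ.counit, (ScCompat.self HB).symm.counit,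
      TensorProduct.smul_tmul', TensorProduct.tmul_smul, smul_smul]
    ring_nf

theorem scCounitRight (hcc : IsComoduleCoalgebra HB AC coact) (hφ : ScCompat HB φ)
    (x : A ⊗[K] H) :
    TensorProduct.rid K _ (TensorProduct.map LinearMap.id (scCounit HB AC)
      (scComul HB AC coact φ x)) = (TensorProduct.congr AC.str HB.str).symm x := by
  induction x using TensorProduct.induction_on with
  | zero => simp
  | add x y hx hy => simp only [map_add, hx, hy]
  | tmul a h =>
    rw [TensorProduct.congr_symm_tmul, ← AC.counit_comul_right, ← HB.counit_comul_right]
    simp only [scComul, scP, LinearMap.comp_apply, TensorProduct.map_tmul]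
    generalize AC.comul a = x
    generalize HB.comul h = y
    induction y using TensorProduct.induction_on with
    | zero => simp
    | add x y hx hy => simp only [map_add, TensorProduct.tmul_add, hx, hy]
    | tmul g k =>
    induction x using TensorProduct.induction_on with
    | zero => simp
    | add x y hx hy => simp only [map_add, TensorProduct.add_tmul, hx, hy]
    | tmul p q =>
    have hg : AC.counit q • g = HB.mul (φ (TensorProduct.rid K H
        (TensorProduct.map LinearMap.id AC.counit (coact q)))) (HB.str.symm g) := by
      rw [hcc.counit_coact_one]; simp [hφ.one, HB.one_mul]
    have hr : TensorProduct.rid K A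
          (TensorProduct.map LinearMap.id AC.counit (p ⊗ₜ[K] q)) ⊗ₜ[K]
        TensorProduct.rid K H (TensorProduct.map LinearMap.id HB.counit (g ⊗ₜ[K] k)) =
        HB.counit k • (p ⊗ₜ[K] (AC.counit q • g)) := by
      simp [TensorProduct.smul_tmul', TensorProduct.tmul_smul, smul_smul]
    rw [hr, hg]
    simp only [TensorProduct.map_tmul, LinearMap.id_apply]
    generalize coact q = x
    induction x using TensorProduct.induction_on with
    | zero => simp
    | add x y hx hy =>
      simp only [map_add, TensorProduct.add_tmul, TensorProduct.tmul_add, smul_add,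
        LinearMap.add_apply, hx, hy]
    | tmul u b =>
    simp [scCounit, AC.counit_str, TensorProduct.tmul_smul, smul_smul, mul_comm]

end Helpers

/-- Proposition 3.1: the `m`-Hom-smash coproduct is a monoidal Hom-coalgebra. -/
theorem smash_coproduct_is_hom_coalgebra
    {K H A : Type*} [Field K] [AddCommGroup H] [Module K H] [AddCommGroup A] [Module K A]
    (HB : HomBialgebraStr K H) (AC : HomCoalgebraStr K A)
    (coact : A →ₗ[K] H ⊗[K] A)
    (hcc : IsComoduleCoalgebra HB AC coact) (m : ℤ) :
    ∃ D : HomCoalgebraStr K (A ⊗[K] H),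
      (∀ (a : A) (h : H), D.comul (a ⊗ₜ[K] h) = scComulElem HB AC coact m a h)
      ∧ (∀ (a : A) (h : H), D.counit (a ⊗ₜ[K] h) = AC.counit a * HB.counit h)
      ∧ D.str = TensorProduct.congr AC.str HB.str := by
  have hφ := ScCompat.zpow HB m
  refine ⟨⟨scComul HB AC coact (HB.str ^ m), scCounit HB AC, TensorProduct.congr AC.str HB.str,
    scCoassoc HB AC coact _ hcc hφ, scComul_str HB AC coact _ hcc hφ,
    scCounitLeft HB AC coact _ hcc hφ, scCounitRight HB AC coact _ hcc hφ, ?_⟩, ?_, ?_, rfl⟩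
  · intro x
    induction x using TensorProduct.induction_on with
    | zero => simp
    | add x y hx hy => simp only [map_add, hx, hy]
    | tmul a h => simp [scCounit, AC.counit_str, HB.counit_str]
  · intro a h
    have e : HB.str ^ (-1 : ℤ) = HB.str.symm := by rw [zpow_neg_one]; rfl
    simp [scComul, scG, scP, scComulElem, e]
  · intro a h
    simp [scCounit]
end
end

section
/- Under the hypotheses of Theorem 3.5 (namely (A ♯_σ^× H, β ⊗ α) is a Radford [(m,k),m]-biproduct monoidal Hom-bialgebra, (H, α) is a σ-monoidal Hom-Hopf algebra with σ-antipode S_H, and S_A is a convolution inverse of id_A commuting with β), the map S(a ⊗ h) = (1_A ⊗ S_H(α^{m−1}(a₍₋₁₎)α⁻²(h)))·(S_A(a₍₀₎) ⊗ 1_H) satisfies S(a₁ ⊗ α^m(a₂₍₋₁₎)α⁻¹(h₁)) · (β(a₂₍₀₎) ⊗ h₂) = ε_A(a)ε_H(h) 1_A ⊗ 1_H for all a ∈ A and h ∈ H; that is, S is a left convolution inverse of the identity map of A ♯_σ^× H. -/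
open TensorProduct

noncomputable section

section RadfordAux

variable {K H A : Type*} [Field K] [AddCommGroup H] [Module K H] [AddCommGroup A] [Module K A]

lemma raux_counit_zpow (HB : HomBialgebraStr K H) (n : ℤ) :
    ∀ x, HB.counit ((HB.str ^ n) x) = HB.counit x := by
  induction n using Int.induction_on with
  | zero => intro x; simp
  | succ i ih => intro x; rw [zpow_add_one, LinearEquiv.mul_apply, ih, HB.counit_str]
  | pred i ih =>
    intro x
    rw [zpow_sub_one, LinearEquiv.mul_apply, ih, ← HB.counit_str (HB.str⁻¹ x)]
    congr 1
    exact HB.str.apply_symm_apply x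

lemma raux_one_zpow (HA : HomAlgebraStr K A) (n : ℤ) : (HA.str ^ n) HA.one = HA.one := by
  have h1 : HA.str⁻¹ HA.one = HA.one := by
    conv_lhs => rw [← HA.str_one]
    exact HA.str.symm_apply_apply _
  induction n using Int.induction_on with
  | zero => simp
  | succ i ih => rw [zpow_add_one, LinearEquiv.mul_apply, HA.str_one, ih]
  | pred i ih => rw [zpow_sub_one, LinearEquiv.mul_apply, h1, ih]

lemma raux_mul_zpow (HA : HomAlgebraStr K A) (n : ℤ) :
    ∀ x y, (HA.str ^ n) (HA.mul x y) = HA.mul ((HA.str ^ n) x) ((HA.str ^ n) y) := by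
  have h1 : ∀ x y, HA.str⁻¹ (HA.mul x y) = HA.mul (HA.str⁻¹ x) (HA.str⁻¹ y) := by
    intro x y
    apply HA.str.injective
    rw [HA.str_mul]
    change HA.str (HA.str.symm _) = HA.mul (HA.str (HA.str.symm _)) (HA.str (HA.str.symm _))
    simp
  induction n using Int.induction_on with
  | zero => simp
  | succ i ih => intro x y; simp only [zpow_add_one, LinearEquiv.mul_apply, HA.str_mul, ih]
  | pred i ih => intro x y; simp only [zpow_sub_one, LinearEquiv.mul_apply, h1, ih]

lemma raux_symm_zpow (f : H ≃ₗ[K] H) (n : ℤ) (x : H) : (f ^ (n + 1)) (f.symm x) = (f ^ n) x := by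
  rw [zpow_add_one, LinearEquiv.mul_apply, LinearEquiv.apply_symm_apply]

lemma raux_sigma_zpow (HB : HomBialgebraStr K H) (AA : HomAlgebraStr K A)
    (σ : H →ₗ[K] H →ₗ[K] A)
    (hσ : ∀ h g : H, σ (HB.str h) (HB.str g) = AA.str (σ h g)) (n : ℤ) :
    ∀ h g, σ ((HB.str ^ n) h) ((HB.str ^ n) g) = (AA.str ^ n) (σ h g) := by
  have h1 : ∀ x y, σ (HB.str⁻¹ x) (HB.str⁻¹ y) = AA.str⁻¹ (σ x y) := by
    intro x y
    apply AA.str.injective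
    rw [← hσ]
    change σ (HB.str (HB.str.symm _)) (HB.str (HB.str.symm _)) = AA.str (AA.str.symm _)
    simp
  induction n using Int.induction_on with
  | zero => simp
  | succ i ih => intro x y; simp only [zpow_add_one, LinearEquiv.mul_apply, hσ, ih]
  | pred i ih => intro x y; simp only [zpow_sub_one, LinearEquiv.mul_apply, h1, ih]

variable {HB : HomBialgebraStr K H} {AA : HomAlgebraStr K A} {AC : HomCoalgebraStr K A}
    {act : H →ₗ[K] A →ₗ[K] A} {coact : A →ₗ[K] H ⊗[K] A} {σ : H →ₗ[K] H →ₗ[K] A} {m k : ℤ}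
    {B : HomBialgebraStr K (A ⊗[K] H)}

/-- `(1 ⊗ x)(1 ⊗ y) = β²σ(α^k x₁, α^k y₁) ⊗ α(x₂y₂)`. -/
lemma raux_mul_one_one (hact : IsWeakModuleAlgebra HB AA act)
    (hB : IsRadfordBiproduct HB AA AC act coact σ m k B) (x y : H) :
    B.mul (AA.one ⊗ₜ[K] x) (AA.one ⊗ₜ[K] y) =
      TensorProduct.map
        (AA.str.toLinearMap ∘ₗ AA.str.toLinearMap ∘ₗ TensorProduct.lift σ ∘ₗ
          TensorProduct.map (HB.str ^ k).toLinearMap (HB.str ^ k).toLinearMap)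
        (HB.str.toLinearMap ∘ₗ TensorProduct.lift HB.mul)
        (TensorProduct.tensorTensorTensorComm K H H H H (HB.comul x ⊗ₜ[K] HB.comul y)) := by
  rw [hB.mul_def, cpMulElem, raux_one_zpow]
  have key : ∀ (x1 y1 : H) (Z : H ⊗[K] H),
      TensorProduct.lift AA.mul (TensorProduct.map
        ((act.flip AA.one) ∘ₗ (HB.str ^ m).toLinearMap)
        (TensorProduct.lift σ ∘ₗ
          TensorProduct.map (HB.str ^ (k+1)).toLinearMap (HB.str ^ k).toLinearMap)
        (TensorProduct.assoc K H H H (Z ⊗ₜ[K] y1))) =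
      AA.str (σ ((HB.str ^ (k+1)) (TensorProduct.lid K H
        (TensorProduct.map HB.counit (LinearMap.id : H →ₗ[K] H) Z))) ((HB.str ^ k) y1)) := by
    intro x1 y1 Z
    induction Z using TensorProduct.induction_on with
    | zero => simp
    | tmul u v => simp [hact.act_one, raux_counit_zpow, AA.one_mul]
    | add u v hu hv => simp only [TensorProduct.add_tmul, map_add, LinearMap.add_apply, hu, hv]
  generalize HB.comul x = X
  generalize HB.comul y = Y
  induction X using TensorProduct.induction_on with
  | zero => simp
  | add u v hu hv => simp only [TensorProduct.add_tmul, map_add, hu, hv]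
  | tmul x1 x2 =>
    induction Y using TensorProduct.induction_on with
    | zero => simp
    | add u v hu hv => simp only [TensorProduct.tmul_add, map_add, hu, hv]
    | tmul y1 y2 =>
      simp only [TensorProduct.tensorTensorTensorComm_tmul, TensorProduct.map_tmul,
        LinearMap.comp_apply, LinearMap.id_apply, LinearEquiv.coe_coe, TensorProduct.lift.tmul,
        key x1, AA.one_mul, HB.counit_comul_left, raux_symm_zpow]

lemma raux_eps_mul_one_one (hact : IsWeakModuleAlgebra HB AA act)
    (hB : IsRadfordBiproduct HB AA AC act coact σ m k B) (x y : H) :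
    TensorProduct.rid K A (TensorProduct.map (LinearMap.id : A →ₗ[K] A) HB.counit
      (B.mul (AA.one ⊗ₜ[K] x) (AA.one ⊗ₜ[K] y))) =
    AA.str (AA.str (σ ((HB.str ^ k) (HB.str.symm x)) ((HB.str ^ k) (HB.str.symm y)))) := by
  rw [raux_mul_one_one hact hB, ← HB.counit_comul_right x, ← HB.counit_comul_right y]
  generalize HB.comul x = X
  generalize HB.comul y = Y
  induction X using TensorProduct.induction_on with
  | zero => simp
  | add u v hu hv => simp only [TensorProduct.add_tmul, map_add, LinearMap.add_apply, hu, hv]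
  | tmul x1 x2 =>
    induction Y using TensorProduct.induction_on with
    | zero => simp
    | add u v hu hv => simp only [TensorProduct.tmul_add, map_add, hu, hv]
    | tmul y1 y2 => simp [HB.counit_str, HB.counit_mul, smul_smul, mul_comm]

lemma raux_str_tmul (hB : IsRadfordBiproduct HB AA AC act coact σ m k B) (a : A) (h : H) :
    B.str (a ⊗ₜ[K] h) = AA.str a ⊗ₜ[K] HB.str h := by
  rw [hB.str_def, TensorProduct.congr_tmul]

lemma raux_sigma_str (hact : IsWeakModuleAlgebra HB AA act)
    (hB : IsRadfordBiproduct HB AA AC act coact σ m k B) (h g : H) :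
    σ (HB.str h) (HB.str g) = AA.str (σ h g) := by
  have e : ∀ t : A ⊗[K] H, TensorProduct.rid K A
      (TensorProduct.map (LinearMap.id : A →ₗ[K] A) HB.counit (B.str t)) =
      AA.str (TensorProduct.rid K A
        (TensorProduct.map (LinearMap.id : A →ₗ[K] A) HB.counit t)) := by
    intro t
    induction t using TensorProduct.induction_on with
    | zero => simp
    | add u v hu hv => simp only [map_add, hu, hv]
    | tmul a h => simp [raux_str_tmul hB, HB.counit_str]
  obtain ⟨x, rfl⟩ := (HB.str ^ k).surjective h
  obtain ⟨y, rfl⟩ := (HB.str ^ k).surjective g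
  have h1 := e (B.mul (AA.one ⊗ₜ[K] HB.str x) (AA.one ⊗ₜ[K] HB.str y))
  rw [B.str_mul, raux_str_tmul hB, raux_str_tmul hB, AA.str_one, raux_eps_mul_one_one hact hB,
    raux_eps_mul_one_one hact hB] at h1
  simp only [LinearEquiv.symm_apply_apply] at h1
  have h2 := AA.str.injective (AA.str.injective h1)
  rw [← h2]
  simp only [← LinearEquiv.mul_apply, ← zpow_one_add, ← zpow_add_one, add_comm]

lemma raux_sigma_one (hact : IsWeakModuleAlgebra HB AA act)
    (hB : IsRadfordBiproduct HB AA AC act coact σ m k B) (g : H) :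
    σ HB.one g = HB.counit g • AA.one := by
  obtain ⟨y, rfl⟩ := (HB.str ^ k).surjective g
  have h1 := raux_eps_mul_one_one hact hB HB.one (HB.str y)
  have h2 : HB.str.symm HB.one = HB.one := by
    rw [LinearEquiv.symm_apply_eq, HB.str_one]
  rw [← hB.one_def, B.one_mul, raux_str_tmul hB, h2, raux_one_zpow] at h1
  simp only [LinearEquiv.symm_apply_apply, TensorProduct.map_tmul, LinearMap.id_apply, 
    TensorProduct.rid_tmul, HB.counit_str, AA.str_one] at h1
  apply AA.str.injective
  apply AA.str.injective
  rw [← h1, raux_counit_zpow]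
  simp [AA.str_one]

/-- `(b ⊗ 1)(c ⊗ g) = b β(1·β⁻²c) ⊗ αg`. -/
lemma raux_mul_left0 (hact : IsWeakModuleAlgebra HB AA act)
    (hB : IsRadfordBiproduct HB AA AC act coact σ m k B) (b c : A) (g : H) :
    B.mul (b ⊗ₜ[K] HB.one) (c ⊗ₜ[K] g) =
      AA.mul b (AA.str (act HB.one ((AA.str ^ (-2 : ℤ)) c))) ⊗ₜ[K] HB.str g := by
  rw [hB.mul_def, cpMulElem, HB.comul_one]
  have hg : HB.str g = HB.str (HB.str (TensorProduct.lid K H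
      (TensorProduct.map HB.counit (LinearMap.id : H →ₗ[K] H) (HB.comul g)))) := by
    rw [HB.counit_comul_left, LinearEquiv.apply_symm_apply]
  rw [hg]
  generalize HB.comul g = Y
  induction Y using TensorProduct.induction_on with
  | zero => simp
  | add u v hu hv => simp only [TensorProduct.tmul_add, map_add, hu, hv]
  | tmul y1 y2 =>
    simp [HB.comul_one, raux_one_zpow, raux_sigma_one hact hB, HB.one_mul, AA.mul_one,
      raux_counit_zpow, TensorProduct.smul_tmul]

lemma raux_tmul_inj (HB : HomBialgebraStr K H) {a b : A} (h : a ⊗ₜ[K] HB.one = b ⊗ₜ[K] HB.one) :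
    a = b := by
  have := congrArg (fun t => TensorProduct.rid K A
      (TensorProduct.map (LinearMap.id : A →ₗ[K] A) HB.counit t)) h
  simpa [HB.counit_one] using this

lemma raux_mul_left (hact : IsWeakModuleAlgebra HB AA act)
    (hB : IsRadfordBiproduct HB AA AC act coact σ m k B) (b c : A) (g : H) :
    B.mul (b ⊗ₜ[K] HB.one) (c ⊗ₜ[K] g) = AA.mul b c ⊗ₜ[K] HB.str g := by
  have h1 := raux_mul_left0 hact hB AA.one c HB.one
  rw [← hB.one_def, B.one_mul, raux_str_tmul hB, HB.str_one, AA.one_mul] at h1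
  rw [raux_mul_left0 hact hB, ← AA.str.injective (raux_tmul_inj HB h1)]

lemma raux_str_eq (hcc : IsComoduleCoalgebra HB AC coact)
    (hB : IsRadfordBiproduct HB AA AC act coact σ m k B) : AA.str = AC.str := by
  have key : ∀ a : A, AC.str.symm a ⊗ₜ[K] HB.one = B.str.symm (a ⊗ₜ[K] HB.one) := by
    intro a
    rw [← B.counit_comul_left, hB.comul_def, scComulElem, HB.comul_one,
      ← AC.counit_comul_left a]
    generalize AC.comul a = X
    induction X using TensorProduct.induction_on with
    | zero => simp
    | add u v hu hv => simp only [TensorProduct.add_tmul, map_add, hu, hv]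
    | tmul a1 a2 =>
      have h2 : a2 = AC.str (TensorProduct.lid K A
        (TensorProduct.map HB.counit (LinearMap.id : A →ₗ[K] A) (coact a2))) := by
        rw [hcc.counit_coact, LinearEquiv.apply_symm_apply]
      conv_lhs => rw [h2]
      simp only [TensorProduct.map_tmul, LinearMap.id_apply]
      generalize coact a2 = Z
      induction Z using TensorProduct.induction_on with
      | zero => simp
      | add u v hu hv =>
        simp only [TensorProduct.add_tmul, TensorProduct.tmul_add, map_add, ← hu, ← hv]
      | tmul z c =>
        have h3 : HB.str.symm HB.one = HB.one := by
          rw [LinearEquiv.symm_apply_eq, HB.str_one]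
        simp [hB.counit_def, HB.counit_mul, raux_counit_zpow, HB.counit_one, h3,
          TensorProduct.smul_tmul', mul_comm]
  ext a
  have h1 := congrArg B.str (key (AC.str a))
  rw [LinearEquiv.apply_symm_apply, LinearEquiv.symm_apply_apply, raux_str_tmul hB, HB.str_one]
    at h1
  exact raux_tmul_inj HB h1

/-- `Φ((x ⊗ (b ⊗ c)) ⊗ (y₁ ⊗ y₂)) = (1 ⊗ S_H(α^{m-1}(x) α⁻¹(y₁)))(S_A(b)c ⊗ y₂)`. -/
def rauxPhi (HB : HomBialgebraStr K H) (AA : HomAlgebraStr K A) (B : HomBialgebraStr K (A ⊗[K] H))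
    (SH : H →ₗ[K] H) (SA : A →ₗ[K] A) (m : ℤ) :
    (H ⊗[K] (A ⊗[K] A)) ⊗[K] (H ⊗[K] H) →ₗ[K] A ⊗[K] H :=
  TensorProduct.lift B.mul ∘ₗ
    TensorProduct.map
      ((TensorProduct.mk K A H AA.one) ∘ₗ SH ∘ₗ TensorProduct.lift HB.mul ∘ₗ
        TensorProduct.map (HB.str ^ (m - 1)).toLinearMap (HB.str ^ (-1 : ℤ)).toLinearMap)
      (TensorProduct.map (TensorProduct.lift (AA.mul ∘ₗ SA)) LinearMap.id) ∘ₗ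
    (TensorProduct.tensorTensorTensorComm K H (A ⊗[K] A) H H).toLinearMap

lemma rauxPhi_tmul (SH : H →ₗ[K] H) (SA : A →ₗ[K] A) (x : H) (D : A ⊗[K] A) (y1 y2 : H) :
    rauxPhi HB AA B SH SA m ((x ⊗ₜ[K] D) ⊗ₜ[K] (y1 ⊗ₜ[K] y2)) =
      B.mul (AA.one ⊗ₜ[K] SH (HB.mul ((HB.str ^ (m - 1)) x) ((HB.str ^ (-1 : ℤ)) y1)))
        (TensorProduct.lift (AA.mul ∘ₗ SA) D ⊗ₜ[K] y2) := by
  simp [rauxPhi]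

lemma raux_pure (hact : IsWeakModuleAlgebra HB AA act)
    (hB : IsRadfordBiproduct HB AA AC act coact σ m k B)
    (SH : H →ₗ[K] H) (hSH : IsSigmaAntipode HB AA σ SH) (SA : A →ₗ[K] A)
    (x z h1 h2 : H) (b c : A) :
    B.mul (B.mul (AA.one ⊗ₜ[K] SH (HB.mul ((HB.str ^ (m - 1)) x)
        ((HB.str ^ (-2 : ℤ)) (HB.mul ((HB.str ^ m) z) ((HB.str ^ (-1 : ℤ)) h1)))))
        (SA b ⊗ₜ[K] HB.one)) (AA.str c ⊗ₜ[K] h2) =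
      B.mul (AA.one ⊗ₜ[K] SH (HB.mul ((HB.str ^ (m - 1)) (HB.mul x z)) ((HB.str ^ (-1 : ℤ)) h1)))
        (AA.mul (SA b) c ⊗ₜ[K] h2) := by
  have e2 : AA.str c ⊗ₜ[K] h2 = B.str (c ⊗ₜ[K] HB.str.symm h2) := by
    rw [raux_str_tmul hB, LinearEquiv.apply_symm_apply]
  rw [e2, ← B.hom_assoc, raux_mul_left hact hB, raux_str_tmul hB, AA.str_one,
    LinearEquiv.apply_symm_apply, ← hSH.antipode_str]
  congr 4
  have e3 : (HB.str ^ (-1 : ℤ)) h1 = HB.str ((HB.str ^ (-2 : ℤ)) h1) := by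
    rw [← LinearEquiv.mul_apply, ← zpow_one_add]; norm_num
  rw [raux_mul_zpow, raux_mul_zpow HB.toHomAlgebraStr (m-1)]
  conv_rhs => rw [e3]
  rw [← HB.hom_assoc, HB.str_mul, HB.str_mul]
  simp only [← LinearEquiv.mul_apply, ← zpow_one_add, ← zpow_add]
  congr 3 <;> ring_nf

lemma raux_main (hact : IsWeakModuleAlgebra HB AA act) (hcc : IsComoduleCoalgebra HB AC coact)
    (hB : IsRadfordBiproduct HB AA AC act coact σ m k B)
    (SH : H →ₗ[K] H) (hSH : IsSigmaAntipode HB AA σ SH) (SA : A →ₗ[K] A)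
    (SAH : A ⊗[K] H →ₗ[K] A ⊗[K] H)
    (hSAH : ∀ (a : A) (h : H),
      SAH (a ⊗ₜ[K] h) = radfordAntipodeElem HB AA coact B.mul SH SA m a h) (a : A) (h : H) :
    TensorProduct.lift B.mul
        (TensorProduct.map SAH (LinearMap.id : A ⊗[K] H →ₗ[K] A ⊗[K] H)
          (scComulElem HB AC coact m a h)) =
    rauxPhi HB AA B SH SA m
      (TensorProduct.map (LinearMap.id : H →ₗ[K] H) AC.comul (coact a) ⊗ₜ[K] HB.comul h) := by
  rw [hcc.coact_comul, scComulElem, ← raux_str_eq hcc hB]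
  generalize AC.comul a = X
  generalize HB.comul h = Y
  induction X using TensorProduct.induction_on with
  | zero => simp
  | add u v hu hv => simp only [TensorProduct.add_tmul, map_add, hu, hv]
  | tmul a1 a2 =>
  induction Y using TensorProduct.induction_on with
  | zero => simp
  | add u v hu hv => simp only [TensorProduct.tmul_add, map_add, hu, hv]
  | tmul h1 h2 =>
  simp only [TensorProduct.map_tmul, LinearMap.id_apply]
  generalize coact a2 = Z
  induction Z using TensorProduct.induction_on with
  | zero => simp
  | add u v hu hv => simp only [TensorProduct.add_tmul, TensorProduct.tmul_add, map_add, hu, hv]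
  | tmul z c =>
  simp only [TensorProduct.assoc_symm_tmul, TensorProduct.tensorTensorTensorComm_tmul,
    TensorProduct.map_tmul, LinearMap.comp_apply, LinearEquiv.coe_coe, TensorProduct.assoc_tmul,
    TensorProduct.lift.tmul, LinearMap.id_apply, hSAH, radfordAntipodeElem]
  generalize coact a1 = W
  induction W using TensorProduct.induction_on with
  | zero => simp
  | add u v hu hv =>
    simp only [TensorProduct.add_tmul, map_add, LinearMap.add_apply, hu, hv]
  | tmul x b =>
  simp only [TensorProduct.tensorTensorTensorComm_tmul, TensorProduct.map_tmul,
    LinearMap.id_apply, rauxPhi_tmul, TensorProduct.lift.tmul, LinearMap.comp_apply,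
    LinearEquiv.coe_coe, LinearMap.flip_apply, TensorProduct.mk_apply]
  exact raux_pure hact hB SH hSH SA x z h1 h2 b c

lemma raux_final (SH : H →ₗ[K] H) (SA : A →ₗ[K] A) (hSA : IsConvInvOfId AA AC SA)
    (T : H ⊗[K] A) (Y : H ⊗[K] H) :
    rauxPhi HB AA B SH SA m
      (TensorProduct.map (LinearMap.id : H →ₗ[K] H) AC.comul T ⊗ₜ[K] Y) =
    TensorProduct.lift B.mul (TensorProduct.map
      ((TensorProduct.mk K A H AA.one) ∘ₗ SH ∘ₗ
        HB.mul ((HB.str ^ (m - 1)) (TensorProduct.rid K H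
          (TensorProduct.map (LinearMap.id : H →ₗ[K] H) AC.counit T))) ∘ₗ
        (HB.str ^ (-1 : ℤ)).toLinearMap)
      (TensorProduct.mk K A H AA.one) Y) := by
  induction Y using TensorProduct.induction_on with
  | zero => simp
  | add u v hu hv => simp only [TensorProduct.tmul_add, map_add, hu, hv]
  | tmul y1 y2 =>
  induction T using TensorProduct.induction_on with
  | zero => simp
  | add u v hu hv =>
    simp only [TensorProduct.map_tmul, TensorProduct.lift.tmul, LinearMap.comp_apply,
      LinearEquiv.coe_coe, TensorProduct.mk_apply] at hu hv ⊢
    simp only [TensorProduct.add_tmul, TensorProduct.tmul_add, map_add, LinearMap.add_apply, hu, hv]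
  | tmul x b =>
    simp [rauxPhi_tmul, hSA.1, ← TensorProduct.smul_tmul']

end RadfordAux

/-- The key computation in the proof of Theorem 3.5: the Radford antipode formula gives a
left convolution inverse of the identity. -/
theorem radford_antipode_left_convolution_inverse
    {K H A : Type*} [Field K] [AddCommGroup H] [Module K H] [AddCommGroup A] [Module K A]
    (HB : HomBialgebraStr K H) (AA : HomAlgebraStr K A) (AC : HomCoalgebraStr K A)
    (act : H →ₗ[K] A →ₗ[K] A) (hact : IsWeakModuleAlgebra HB AA act)
    (coact : A →ₗ[K] H ⊗[K] A) (hcc : IsComoduleCoalgebra HB AC coact)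
    (σ : H →ₗ[K] H →ₗ[K] A) (m k : ℤ)
    (B : HomBialgebraStr K (A ⊗[K] H))
    (hB : IsRadfordBiproduct HB AA AC act coact σ m k B)
    (SH : H →ₗ[K] H) (hSH : IsSigmaAntipode HB AA σ SH)
    (SA : A →ₗ[K] A) (hSA : IsConvInvOfId AA AC SA)
    (hSAstr : ∀ a : A, SA (AA.str a) = AA.str (SA a))
    (SAH : A ⊗[K] H →ₗ[K] A ⊗[K] H)
    (hSAH : ∀ (a : A) (h : H),
      SAH (a ⊗ₜ[K] h) = radfordAntipodeElem HB AA coact B.mul SH SA m a h) :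
    ∀ (a : A) (h : H),
      TensorProduct.lift B.mul
        (TensorProduct.map SAH (LinearMap.id : A ⊗[K] H →ₗ[K] A ⊗[K] H)
          (scComulElem HB AC coact m a h))
      = (AC.counit a * HB.counit h) • (AA.one ⊗ₜ[K] HB.one) := by
  intro a h
  rw [raux_main hact hcc hB SH hSH SA SAH hSAH, raux_final SH SA hSA, hcc.counit_coact_one]
  have h1 : ∀ y : H, HB.mul ((HB.str ^ (m - 1)) (AC.counit a • HB.one)) ((HB.str ^ (-1 : ℤ)) y)
      = AC.counit a • y := by
    intro y
    rw [map_smul, raux_one_zpow, map_smul, LinearMap.smul_apply, HB.one_mul,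
      ← LinearEquiv.mul_apply, ← zpow_one_add]
    simp
  have h2 : ∀ Y : H ⊗[K] H, TensorProduct.lift B.mul (TensorProduct.map
      ((TensorProduct.mk K A H AA.one) ∘ₗ SH ∘ₗ
        HB.mul ((HB.str ^ (m - 1)) (AC.counit a • HB.one)) ∘ₗ (HB.str ^ (-1 : ℤ)).toLinearMap)
      (TensorProduct.mk K A H AA.one) Y) = 
      AC.counit a • TensorProduct.map (AA.str ^ (k + 2)).toLinearMap HB.str.toLinearMap
        (TensorProduct.map (TensorProduct.lift σ) (TensorProduct.lift HB.mul)
        (TensorProduct.tensorTensorTensorComm K H H H H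
          (TensorProduct.map (HB.comul ∘ₗ SH) HB.comul Y))) := by
    intro Y
    induction Y using TensorProduct.induction_on with
    | zero => simp
    | add u v hu hv => simp only [map_add, smul_add, hu, hv]
    | tmul y1 y2 =>
      simp only [TensorProduct.map_tmul, TensorProduct.lift.tmul, LinearMap.comp_apply,
        LinearEquiv.coe_coe, TensorProduct.mk_apply, h1]
      simp only [map_smul, LinearMap.smul_apply, TensorProduct.tmul_smul, raux_mul_one_one hact hB]
      congr 1
      generalize HB.comul (SH y1) ⊗ₜ[K] HB.comul y2 = W
      generalize TensorProduct.tensorTensorTensorComm K H H H H W = V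
      rw [← LinearMap.comp_apply, ← TensorProduct.map_comp]
      congr 2
      ext u v
      simp only [TensorProduct.AlgebraTensorModule.curry_apply, TensorProduct.curry_apply,
        LinearMap.coe_restrictScalars, LinearMap.comp_apply, TensorProduct.map_tmul,
        LinearEquiv.coe_coe, TensorProduct.lift.tmul,
        raux_sigma_zpow HB AA σ (raux_sigma_str hact hB), ← LinearEquiv.mul_apply]
      congr 1
      group
  rw [h2, hSH.left]
  simp [raux_one_zpow, HB.str_one, smul_smul]
end
end
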